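/- The quantity f_Δ(n_i, k_i) := ∫_{SU(2)} ∏_{i=1}^{3} ⟨n_i| X |n_i⟩^{2k_i} dX, where the integral is over Haar measure, is a nonnegative real number whenever k₁n₁ + k₂n₂ + k₃n₃ = 0; in fact f_Δ = ((1-n₁·n₂)^p (1-n₂·n₃)^q (1-n₁·n₃)^r / 2^{p+q+r}) · (p+q)!(q+r)!(p+r)! / ((p+q+r+1)! p! q! r!) where p = k₁+k₂-k₃, q = k₂+k₃-k₁, r = k₁+k₃-k₂ are nonnegative integers. -/

import Mathlib

open Matrix Complex

/-- The Pauli matrices `σ₁, σ₂, σ₃`. -/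
noncomputable def pauli : Fin 3 → Matrix (Fin 2) (Fin 2) ℂ
  | 0 => !![0, 1; 1, 0]
  | 1 => !![0, -Complex.I; Complex.I, 0]
  | 2 => !![1, 0; 0, -1]

/-- `n·σ` for a vector `n ∈ ℝ³`. -/
noncomputable def dotSigma (n : Fin 3 → ℝ) : Matrix (Fin 2) (Fin 2) ℂ :=
  ∑ i, (n i : ℂ) • pauli i

/-- `v` is a unit-norm `+1`-eigenvector of `n·σ`, i.e. a spin-1/2 coherent state `|n⟩`. -/
def IsCoherentState (n : Fin 3 → ℝ) (v : Fin 2 → ℂ) : Prop :=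
  (dotSigma n).mulVec v = v ∧ star v ⬝ᵥ v = 1

open MeasureTheory

/-- `SU(2)` as a subgroup of the unitary group: the kernel of the determinant. -/
noncomputable def SU2 : Subgroup (Matrix.unitaryGroup (Fin 2) ℂ) :=
  MonoidHom.ker (Matrix.detMonoidHom.comp (Matrix.unitaryGroup (Fin 2) ℂ).subtype)

noncomputable instance : MeasurableSpace SU2 := borel _

/-- The underlying matrix of an element of `SU(2)`. -/
def SU2.mat (X : SU2) : Matrix (Fin 2) (Fin 2) ℂ := (X : Matrix.unitaryGroup (Fin 2) ℂ)

/-!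
Identify `SU(2)` with the unit sphere of `ℝ⁴`. Left translations move any point of the sphere to any
other, so the moments of the coordinates in a real direction `x` depend only on the length of `x`;
being polynomial in `x` they are then known in complex directions as well, which amounts to
`∫ tr (A X) ^ (2 m) dX = Cₘ (det A) ^ m` for every complex matrix `A`, where the Catalan number `Cₘ`
comes from a recursion forced by `∑ coordinates² = 1`. For `A = ∑ tᵢ wᵢ uᵢᵀ` the trace is
`∑ tᵢ ⟨uᵢ, X wᵢ⟩` and `det A = ∑ tᵢ tⱼ (uᵢ ∧ uⱼ) (wᵢ ∧ wⱼ)`, and comparing the coefficients of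
`t₁ ^ (p + r) t₂ ^ (p + q) t₃ ^ (q + r)` evaluates the integral. For coherent states
`|vᵢ ∧ vⱼ|² = (1 - nᵢ · nⱼ) / 2`, which is nonnegative.
-/

section

open Finset MvPolynomial

theorem coeff_sum_monomial_pow {R σ κ : Type*} [CommSemiring R] [Fintype κ]
    {e : κ → σ →₀ ℕ} (he : LinearIndependent ℕ e) (c : κ → R) (k : κ → ℕ) :
    coeff (∑ j, k j • e j) ((∑ j, monomial (e j) (c j)) ^ ∑ j, k j) =
      Nat.multinomial univ k * ∏ j, c j ^ k j := by
  classical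
  simp only [← Fintype.linearCombination_apply ℕ e, sum_pow_eq_sum_piAntidiag, monomial_pow,
    ← monomial_sum_prod, coeff_sum, ← C_eq_coe_nat, coeff_C_mul, coeff_monomial]
  rw [sum_eq_single_of_mem k (by simp) fun l _ hl ↦ ?_, if_pos rfl]
  rw [if_neg fun h ↦ hl (he.fintypeLinearCombination_injective h), mul_zero]

theorem prod_pow_single_add_single {ι M : Type*} [Fintype ι] [DecidableEq ι] [CommMonoid M]
    (a : ι → M) (i j : ι) (p q : ℕ) :
    ∏ l, a l ^ (Pi.single i p + Pi.single j q : ι → ℕ) l = a i ^ p * a j ^ q := by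
  simp only [Pi.add_apply, pow_add, prod_mul_distrib, Pi.single_apply, pow_ite, pow_zero,
    prod_ite_eq', mem_univ, if_true]

theorem multinomial_single_add_single {ι : Type*} [Fintype ι] [DecidableEq ι] {i j : ι}
    (hij : i ≠ j) (p q : ℕ) :
    Nat.multinomial univ (Pi.single i p + Pi.single j q : ι → ℕ) = (p + q).choose q := by
  rw [← Nat.multinomial_congr_of_sdiff (subset_univ {j, i}) (by simp +contextual) fun _ _ ↦ rfl,
    Nat.binomial_eq_choose hij.symm]
  simp [hij, hij.symm, add_comm]

variable {Ω ι 𝕜 : Type*} [MeasurableSpace Ω] [Fintype ι] [RCLike 𝕜]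
  {μ : Measure Ω} {f : ι → Ω → 𝕜}

/-- The generating polynomial of the moments of order `N` of the random vector `f`: integrating
`(∑ i, t i * f i) ^ N` term by term gives its value at `t`. -/
noncomputable def momentPolynomial [DecidableEq ι] (μ : Measure Ω) (f : ι → Ω → 𝕜) (N : ℕ) :
    MvPolynomial ι 𝕜 :=
  ∑ k ∈ piAntidiag univ N, monomial (Finsupp.equivFunOnFinite.symm k)
    (Nat.multinomial univ k * ∫ ω, ∏ i, f i ω ^ k i ∂μ)

theorem coeff_momentPolynomial [DecidableEq ι] (k : ι → ℕ) :
    coeff (Finsupp.equivFunOnFinite.symm k) (momentPolynomial μ f (∑ i, k i)) =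
      Nat.multinomial univ k * ∫ ω, ∏ i, f i ω ^ k i ∂μ := by
  simp [momentPolynomial, coeff_sum, coeff_monomial,
    Finsupp.equivFunOnFinite.symm.injective.eq_iff]

theorem eval_momentPolynomial [DecidableEq ι]
    (hf : ∀ k : ι → ℕ, Integrable (fun ω ↦ ∏ i, f i ω ^ k i) μ) (N : ℕ) (t : ι → 𝕜) :
    eval t (momentPolynomial μ f N) = ∫ ω, (∑ i, t i * f i ω) ^ N ∂μ := by
  simp only [sum_pow_eq_sum_piAntidiag, mul_pow, prod_mul_distrib]
  rw [integral_finsetSum _ fun k _ ↦ ((hf k).const_mul _).const_mul _]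
  simp only [momentPolynomial, map_sum, eval_monomial, integral_const_mul,
    Finsupp.prod_fintype _ _ fun _ ↦ pow_zero _, Finsupp.equivFunOnFinite_symm_apply_apply]
  exact sum_congr rfl fun k _ ↦ by ring

/-- The moment of order `2 * m` of the random vector `f` in a real direction `x` depends only on
the length of `x`: it is `c * ‖x‖ ^ (2 * m)` for the Euclidean norm. -/
def HasIsotropicMoment (μ : Measure Ω) (f : ι → Ω → 𝕜) (m : ℕ) (c : 𝕜) : Prop :=
  ∀ x : ι → ℝ, ∫ ω, (∑ i, (x i : 𝕜) * f i ω) ^ (2 * m) ∂μ = c * (∑ i, (x i : 𝕜) ^ 2) ^ m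

namespace HasIsotropicMoment

variable {m : ℕ} {c : 𝕜}

theorem integral_pow (h : HasIsotropicMoment μ f m c) (i : ι) :
    ∫ ω, f i ω ^ (2 * m) ∂μ = c := by
  classical
  simpa [Pi.single_apply, ite_pow] using h (Pi.single i 1)

variable (hf : ∀ k : ι → ℕ, Integrable (fun ω ↦ ∏ i, f i ω ^ k i) μ)
include hf

theorem momentPolynomial_eq [DecidableEq ι] (h : HasIsotropicMoment μ f m c) :
    momentPolynomial μ f (2 * m) = C c * (∑ i, X i ^ 2) ^ m := by
  -- Both sides are polynomials in the direction and agree on the real ones.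
  refine funext_set (fun _ ↦ Set.range ((↑) : ℝ → 𝕜))
    (fun _ ↦ Set.infinite_range_of_injective RCLike.ofReal_injective) fun z hz ↦ ?_
  choose x hx using fun i ↦ hz i trivial
  simp [eval_momentPolynomial hf, ← hx, h x]

theorem integral_sum_mul_pow (h : HasIsotropicMoment μ f m c) (z : ι → 𝕜) :
    ∫ ω, (∑ i, z i * f i ω) ^ (2 * m) ∂μ = c * (∑ i, z i ^ 2) ^ m := by
  classical
  simp [← eval_momentPolynomial hf, h.momentPolynomial_eq hf]

theorem multinomial_mul_integral_prod_pow (h : HasIsotropicMoment μ f m c) (k : ι → ℕ)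
    (hk : ∑ i, k i = m) :
    Nat.multinomial univ (fun i ↦ 2 * k i) * ∫ ω, ∏ i, f i ω ^ (2 * k i) ∂μ =
      c * Nat.multinomial univ k := by
  classical
  subst hk
  have double (l : ι → ℕ) : ∑ i, l i • (Finsupp.single i 2 : ι →₀ ℕ) =
      Finsupp.equivFunOnFinite.symm fun i ↦ 2 * l i := by
    ext i
    simp [Finsupp.single_apply, mul_comm]
  have indep : LinearIndependent ℕ fun i ↦ (Finsupp.single i 2 : ι →₀ ℕ) := by
    refine linearIndependent_iff_injective_fintypeLinearCombination.2 fun k l hkl ↦ ?_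
    simp only [Fintype.linearCombination_apply, double, EmbeddingLike.apply_eq_iff_eq] at hkl
    exact funext fun i ↦ by simpa using congrFun hkl i
  rw [← coeff_momentPolynomial, ← mul_sum, h.momentPolynomial_eq hf, coeff_C_mul, ← double]
  simp only [X_pow_eq_monomial, coeff_sum_monomial_pow indep, one_pow, prod_const_one, mul_one]

theorem integral_pow_mul_sq (h : HasIsotropicMoment μ f (m + 1) c) {i j : ι} (hij : i ≠ j) :
    (2 * m + 1) * ∫ ω, f i ω ^ (2 * m) * f j ω ^ 2 ∂μ = c := by
  classical
  have hdouble : (fun l ↦ 2 * (Pi.single i m + Pi.single j 1 : ι → ℕ) l) =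
      Pi.single i (2 * m) + Pi.single j 2 := by
    ext l
    simp [Pi.single_apply, mul_add]
  have hchoose : (2 * m + 2).choose 2 = (m + 1) * (2 * m + 1) := by
    rw [Nat.choose_two_right, Nat.div_eq_of_eq_mul_left two_pos]
    simp only [Nat.add_one_sub_one]
    ring
  have key := h.multinomial_mul_integral_prod_pow hf (Pi.single i m + Pi.single j 1)
    (by simp [sum_add_distrib])
  simp only [congrFun hdouble, prod_pow_single_add_single,
    multinomial_single_add_single hij, hchoose, Nat.choose_one_right] at key
  push_cast at key
  have hm : (m + 1 : 𝕜) ≠ 0 := by exact_mod_cast m.succ_ne_zero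
  exact mul_left_cancel₀ hm (by linear_combination key)

theorem moment_succ [Nonempty ι] {c' : 𝕜} (h : HasIsotropicMoment μ f m c)
    (h' : HasIsotropicMoment μ f (m + 1) c') (hunit : ∀ ω, ∑ i, f i ω ^ 2 = 1) :
    (2 * m + Fintype.card ι) * c' = (2 * m + 1) * c := by
  classical
  obtain ⟨i⟩ := ‹Nonempty ι›
  have hint (j : ι) : Integrable (fun ω ↦ f i ω ^ (2 * m) * f j ω ^ 2) μ :=
    (hf (Pi.single i (2 * m) + Pi.single j 2)).congr <|
      .of_forall fun ω ↦ prod_pow_single_add_single (f · ω) i j _ _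
  have hself : ∫ ω, f i ω ^ (2 * m) * f i ω ^ 2 ∂μ = c' := by
    simpa only [← pow_add, mul_add_one] using h'.integral_pow i
  have hother : ∀ j ∈ univ.erase i, (2 * m + 1) * ∫ ω, f i ω ^ (2 * m) * f j ω ^ 2 ∂μ = c' :=
    fun j hj ↦ h'.integral_pow_mul_sq hf (ne_of_mem_erase hj).symm
  calc (2 * m + Fintype.card ι) * c'
      = (2 * m + 1) * c' + ∑ _j ∈ univ.erase i, c' := by
        simp only [sum_const, card_erase_of_mem (mem_univ i), card_univ, nsmul_eq_mul,
          Nat.cast_sub (Nat.one_le_iff_ne_zero.2 Fintype.card_ne_zero), Nat.cast_one]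
        ring
    _ = (2 * m + 1) * ∑ j, ∫ ω, f i ω ^ (2 * m) * f j ω ^ 2 ∂μ := by
        rw [← add_sum_erase _ _ (mem_univ i), hself, mul_add, mul_sum, sum_congr rfl hother]
    _ = (2 * m + 1) * ∫ ω, f i ω ^ (2 * m) ∂μ := by
        simp only [← integral_finsetSum _ fun j _ ↦ hint j, ← mul_sum, hunit, mul_one]
    _ = (2 * m + 1) * c := by rw [h.integral_pow]

end HasIsotropicMoment

end

theorem add_two_mul_catalan_succ (m : ℕ) :
    (m + 2) * catalan (m + 1) = 2 * (2 * m + 1) * catalan m := by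
  refine Nat.eq_of_mul_eq_mul_left m.succ_pos ?_
  calc (m + 1) * ((m + 2) * catalan (m + 1))
      = (m + 1) * (m + 1).centralBinom := by rw [← succ_mul_catalan_eq_centralBinom (m + 1)]
    _ = 2 * (2 * m + 1) * m.centralBinom := Nat.succ_mul_centralBinom_succ m
    _ = (m + 1) * (2 * (2 * m + 1) * catalan m) := by
        rw [← succ_mul_catalan_eq_centralBinom m]
        ring

instance (n 𝕜 : Type*) [Fintype n] [DecidableEq n] [RCLike 𝕜] :
    CompactSpace (unitaryGroup n 𝕜) := by
  have hK : IsCompact (Set.univ.pi fun _ : n ↦ Set.univ.pi fun _ : n ↦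
      Metric.closedBall (0 : 𝕜) 1) :=
    isCompact_univ_pi fun _ ↦ isCompact_univ_pi fun _ ↦ isCompact_closedBall _ _
  refine isCompact_iff_compactSpace.1
    (hK.of_isClosed_subset (isClosed_unitary (R := Matrix n n 𝕜)) fun U hU i _ j _ ↦ ?_)
  simpa using entry_norm_bound_of_unitary hU i j

namespace SU2

instance : BorelSpace SU2 := ⟨rfl⟩

instance : CompactSpace SU2 := by
  have hdet : Continuous fun U : unitaryGroup (Fin 2) ℂ ↦ (U : Matrix (Fin 2) (Fin 2) ℂ).det :=
    continuous_subtype_val.matrix_det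
  exact isCompact_iff_compactSpace.1 ((isClosed_singleton (x := (1 : ℂ))).preimage hdet).isCompact

@[fun_prop]
theorem continuous_mat : Continuous mat := continuous_subtype_val.comp continuous_subtype_val

theorem star_mat_eq_adjugate (X : SU2) : star (mat X) = (mat X).adjugate := by
  have hdet : (mat X).det = 1 := X.2
  refine left_inv_eq_right_inv (mem_unitaryGroup_iff'.1 X.1.2 : star (mat X) * mat X = 1) ?_
  rw [mul_adjugate, hdet, one_smul]

/-- The complex `2 × 2` matrix of the quaternion `x 0 + x 1 i + x 2 j + x 3 k`. -/
def quaternionMatrix (x : Fin 4 → ℝ) : Matrix (Fin 2) (Fin 2) ℂ :=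
  !![x 0 + x 1 * I, x 2 + x 3 * I; -x 2 + x 3 * I, x 0 - x 1 * I]

theorem star_quaternionMatrix (x : Fin 4 → ℝ) :
    star (quaternionMatrix x) = (quaternionMatrix x).adjugate := by
  ext i j
  fin_cases i <;> fin_cases j <;>
    simp [quaternionMatrix, adjugate_fin_two, sub_eq_add_neg, add_comm]

theorem det_quaternionMatrix (x : Fin 4 → ℝ) :
    (quaternionMatrix x).det = ((∑ i, x i ^ 2 : ℝ) : ℂ) := by
  rw [quaternionMatrix, det_fin_two_of, Fin.sum_univ_four]
  push_cast
  linear_combination -(x 1 ^ 2 + x 3 ^ 2 : ℂ) * I_sq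

/-- The coordinates of `X` under the identification of `SU(2)` with the unit sphere of `ℝ⁴`, that
is, with the unit quaternions. -/
def coord (X : SU2) : Fin 4 → ℝ :=
  ![(mat X 0 0).re, (mat X 0 0).im, (mat X 0 1).re, (mat X 0 1).im]

theorem mat_eq_quaternionMatrix_coord (X : SU2) : mat X = quaternionMatrix (coord X) := by
  have h11 : mat X 1 1 = star (mat X 0 0) := by
    simpa [adjugate_fin_two] using (congr_fun₂ (star_mat_eq_adjugate X) 0 0).symm
  have h10 : mat X 1 0 = -star (mat X 0 1) := by
    simpa [adjugate_fin_two, neg_eq_iff_eq_neg] using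
      (congr_fun₂ (star_mat_eq_adjugate X) 1 0).symm
  ext i j
  fin_cases i <;> fin_cases j <;> simp [quaternionMatrix, coord, h10, h11, Complex.ext_iff]

@[fun_prop]
theorem continuous_coord (i : Fin 4) : Continuous fun X ↦ coord X i := by
  fin_cases i
  · exact continuous_re.comp (continuous_mat.matrix_elem 0 0)
  · exact continuous_im.comp (continuous_mat.matrix_elem 0 0)
  · exact continuous_re.comp (continuous_mat.matrix_elem 0 1)
  · exact continuous_im.comp (continuous_mat.matrix_elem 0 1)

theorem coord_zero_inv_mul (Y X : SU2) : coord (Y⁻¹ * X) 0 = ∑ i, coord Y i * coord X i := by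
  have hmat : mat (Y⁻¹ * X) = star (mat Y) * mat X := rfl
  rw [coord, hmat, mat_eq_quaternionMatrix_coord X, mat_eq_quaternionMatrix_coord Y]
  simp only [quaternionMatrix, mul_apply, Fin.sum_univ_two, Fin.sum_univ_four, star_apply,
    of_apply, cons_val, RCLike.star_def, map_add, map_mul, map_neg, conj_ofReal, conj_I, add_re,
    add_im, mul_re, mul_im, neg_re, neg_im, ofReal_re, ofReal_im, I_re, I_im]
  ring

theorem sum_coord_sq (X : SU2) : ∑ i, coord X i ^ 2 = 1 := by
  have hone : coord 1 0 = 1 := by simp [coord, mat]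
  simp only [pow_two, ← coord_zero_inv_mul, inv_mul_cancel, hone]

theorem exists_coord_eq {x : Fin 4 → ℝ} (hx : ∑ i, x i ^ 2 = 1) : ∃ X, coord X = x := by
  have hdet : (quaternionMatrix x).det = 1 := by rw [det_quaternionMatrix, hx, ofReal_one]
  have hunitary : quaternionMatrix x ∈ unitaryGroup (Fin 2) ℂ := by
    rw [mem_unitaryGroup_iff, star_quaternionMatrix, mul_adjugate, hdet, one_smul]
  refine ⟨⟨⟨quaternionMatrix x, hunitary⟩, hdet⟩, ?_⟩
  ext i
  fin_cases i <;> simp [coord, mat, quaternionMatrix]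

theorem exists_eq_smul_coord (x : Fin 4 → ℝ) : ∃ (s : ℝ) (X : SU2), x = s • coord X := by
  obtain rfl | hx := eq_or_ne x 0
  · exact ⟨0, 1, by simp⟩
  have hpos : 0 < ∑ i, x i ^ 2 := by
    obtain ⟨i, hi⟩ := Function.ne_iff.1 hx
    exact Finset.sum_pos' (fun _ _ ↦ sq_nonneg _) ⟨i, Finset.mem_univ i, sq_pos_of_ne_zero hi⟩
  obtain ⟨X, hX⟩ := exists_coord_eq (x := (√(∑ i, x i ^ 2))⁻¹ • x) (by
    simp [mul_pow, ← Finset.mul_sum, Real.sq_sqrt hpos.le, hpos.ne'])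
  exact ⟨√(∑ i, x i ^ 2), X, by rw [hX, smul_inv_smul₀ (Real.sqrt_pos.2 hpos).ne']⟩

theorem integrable_of_continuous {μ : Measure SU2} [IsFiniteMeasure μ] {f : SU2 → ℂ}
    (hf : Continuous f) : Integrable f μ :=
  hf.integrable_of_hasCompactSupport (HasCompactSupport.of_compactSpace f)

theorem integrable_prod_coord_pow (μ : Measure SU2) [IsFiniteMeasure μ] (k : Fin 4 → ℕ) :
    Integrable (fun X ↦ ∏ i, (coord X i : ℂ) ^ k i) μ :=
  integrable_of_continuous (by fun_prop)

variable (μ : Measure SU2) [μ.IsMulLeftInvariant]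

theorem hasIsotropicMoment_coord (m : ℕ) :
    HasIsotropicMoment μ (fun i X ↦ (coord X i : ℂ)) m (∫ X, (coord X 0 : ℂ) ^ (2 * m) ∂μ) := by
  intro x
  obtain ⟨s, Y, rfl⟩ := exists_eq_smul_coord x
  have hdot (X : SU2) :
      ∑ i, (((s • coord Y) i : ℝ) : ℂ) * coord X i = s * (coord (Y⁻¹ * X) 0 : ℂ) := by
    simp [coord_zero_inv_mul, Finset.mul_sum, mul_assoc]
  have hsq : ∑ i, (((s • coord Y) i : ℝ) : ℂ) ^ 2 = (s : ℂ) ^ 2 := by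
    have := sum_coord_sq Y
    simp only [Pi.smul_apply, smul_eq_mul, ofReal_mul, mul_pow, ← Finset.mul_sum]
    exact_mod_cast by rw [this, mul_one]
  simp only [RCLike.ofReal_eq_complex_ofReal]
  rw [hsq, ← integral_mul_left_eq_self (fun X ↦ (coord X 0 : ℂ) ^ (2 * m)) Y⁻¹]
  simp only [hdot, mul_pow, integral_const_mul, ← pow_mul]
  ring

variable [IsProbabilityMeasure μ]

theorem integral_coord_zero_pow (m : ℕ) :
    ∫ X, (coord X 0 : ℂ) ^ (2 * m) ∂μ = catalan m / 4 ^ m := by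
  induction m with
  | zero => simp
  | succ m ih =>
    have hrec := (hasIsotropicMoment_coord μ m).moment_succ (integrable_prod_coord_pow μ)
      (hasIsotropicMoment_coord μ (m + 1)) fun X ↦ by exact_mod_cast sum_coord_sq X
    have hcat : (m + 2 : ℂ) * catalan (m + 1) = 2 * (2 * m + 1) * catalan m := by
      exact_mod_cast add_two_mul_catalan_succ m
    have hm : (m + 2 : ℂ) ≠ 0 := by exact_mod_cast (m + 1).succ_ne_zero
    rw [ih, Fintype.card_fin] at hrec
    push_cast at hrec
    field_simp at hrec
    rw [eq_div_iff (by simp : (4 : ℂ) ^ (m + 1) ≠ 0)]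
    refine mul_left_cancel₀ hm ?_
    linear_combination 2 * hrec - hcat

theorem integral_trace_mul_mat_pow (A : Matrix (Fin 2) (Fin 2) ℂ) (m : ℕ) :
    ∫ X, (A * mat X).trace ^ (2 * m) ∂μ = catalan m * A.det ^ m := by
  let z : Fin 4 → ℂ := ![A 0 0 + A 1 1, (A 0 0 - A 1 1) * I, A 1 0 - A 0 1, (A 1 0 + A 0 1) * I]
  have htrace (X : SU2) : (A * mat X).trace = ∑ i, z i * coord X i := by
    simp only [mat_eq_quaternionMatrix_coord X, quaternionMatrix, z, trace_fin_two, mul_apply,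
      Fin.sum_univ_two, Fin.sum_univ_four, of_apply, cons_val]
    ring
  have hdet : ∑ i, z i ^ 2 = 4 * A.det := by
    simp only [z, Fin.sum_univ_four, det_fin_two, Matrix.cons_val]
    linear_combination ((A 0 0 - A 1 1) ^ 2 + (A 1 0 + A 0 1) ^ 2) * I_sq
  simp only [htrace]
  rw [(hasIsotropicMoment_coord μ m).integral_sum_mul_pow (integrable_prod_coord_pow μ), hdet,
    integral_coord_zero_pow, mul_pow]
  field_simp

end SU2

theorem factorial_mul_factorial_mul_catalan (m : ℕ) :
    (m + 1).factorial * m.factorial * catalan m = (2 * m).factorial := by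
  calc (m + 1).factorial * m.factorial * catalan m
      = m.centralBinom * m.factorial * m.factorial := by
        rw [← succ_mul_catalan_eq_centralBinom, Nat.factorial_succ]
        ring
    _ = (2 * m).factorial := by
        simpa [Nat.centralBinom, two_mul] using Nat.add_choose_mul_factorial_mul_factorial m m

/-- The symplectic form on `R²`, the coordinate of `v ∧ w`. -/
def wedge {R : Type*} [CommRing R] (v w : Fin 2 → R) : R := v 0 * w 1 - v 1 * w 0

/-- The products of the `2 × 2` minors of `u` and `w`, for the pairs of rows `01`, `12`, `02`
(the order of the exponents `p`, `q`, `r` in the triangle formula). -/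
def wedgeWeights {R : Type*} [CommRing R] (u w : Fin 3 → Fin 2 → R) : Fin 3 → R :=
  ![wedge (u 0) (u 1) * wedge (w 0) (w 1), wedge (u 1) (u 2) * wedge (w 1) (w 2),
    wedge (u 0) (u 2) * wedge (w 0) (w 2)]

-- This is the Cauchy-Binet formula for `wᵀ * diagonal t * u`.
theorem det_sum_smul_vecMulVec {R : Type*} [CommRing R] (t : Fin 3 → R) (u w : Fin 3 → Fin 2 → R) :
    (∑ i, t i • vecMulVec (w i) (u i)).det =
      t 0 * t 1 * wedgeWeights u w 0 + t 1 * t 2 * wedgeWeights u w 1 +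
        t 0 * t 2 * wedgeWeights u w 2 := by
  simp only [det_fin_two, Fin.sum_univ_three, Matrix.add_apply, Matrix.smul_apply,
    vecMulVec_apply, smul_eq_mul, wedgeWeights, wedge, cons_val]
  ring

/-- The exponent vectors of `t 0 * t 1`, `t 1 * t 2`, `t 0 * t 2`, the edges of a triangle seen as
squarefree monomials in its vertices. -/
noncomputable def edge : Fin 3 → Fin 3 →₀ ℕ :=
  ![.single 0 1 + .single 1 1, .single 1 1 + .single 2 1, .single 0 1 + .single 2 1]

theorem sum_smul_edge (k : Fin 3 → ℕ) :
    ∑ j, k j • edge j = Finsupp.equivFunOnFinite.symm ![k 0 + k 2, k 0 + k 1, k 1 + k 2] := by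
  ext i
  fin_cases i <;> simp [edge, Fin.sum_univ_three]

theorem sum_triangle_degrees (k : Fin 3 → ℕ) :
    ∑ i, ![k 0 + k 2, k 0 + k 1, k 1 + k 2] i = 2 * ∑ j, k j := by
  simp only [Fin.sum_univ_three, cons_val]
  omega

theorem linearIndependent_edge : LinearIndependent ℕ edge := by
  refine linearIndependent_iff_injective_fintypeLinearCombination.2 fun k l h ↦ ?_
  simp only [Fintype.linearCombination_apply, sum_smul_edge, EmbeddingLike.apply_eq_iff_eq] at h
  have h0 : k 0 + k 2 = l 0 + l 2 := congrFun h 0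
  have h1 : k 0 + k 1 = l 0 + l 1 := congrFun h 1
  have h2 : k 1 + k 2 = l 1 + l 2 := congrFun h 2
  ext i
  fin_cases i <;> simp only [Fin.zero_eta, Fin.mk_one, Fin.reduceFinMk] <;> omega

namespace SU2

variable (μ : Measure SU2) [μ.IsMulLeftInvariant] [IsProbabilityMeasure μ]
  (u w : Fin 3 → Fin 2 → ℂ)

theorem momentPolynomial_dotProduct_mulVec (m : ℕ) :
    momentPolynomial μ (fun i X ↦ u i ⬝ᵥ mat X *ᵥ w i) (2 * m) =
      MvPolynomial.C (catalan m : ℂ) *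
        (∑ j, MvPolynomial.monomial (edge j) (wedgeWeights u w j)) ^ m := by
  refine MvPolynomial.funext fun t ↦ ?_
  have hint (k : Fin 3 → ℕ) : Integrable (fun X ↦ ∏ i, (u i ⬝ᵥ mat X *ᵥ w i) ^ k i) μ :=
    integrable_of_continuous (by fun_prop)
  have htrace (X : SU2) : ∑ i, t i * (u i ⬝ᵥ mat X *ᵥ w i) =
      ((∑ i, t i • vecMulVec (w i) (u i)) * mat X).trace := by
    simp only [trace_mul_comm _ (mat X), Finset.mul_sum, trace_sum, mul_smul_comm, trace_smul,
      mul_vecMulVec, trace_vecMulVec, smul_eq_mul, dotProduct_comm (u _)]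
  have hdet : (∑ i, t i • vecMulVec (w i) (u i)).det =
      ∑ j, MvPolynomial.eval t (MvPolynomial.monomial (edge j) (wedgeWeights u w j)) := by
    rw [det_sum_smul_vecMulVec, Fin.sum_univ_three]
    simp [edge, MvPolynomial.eval_monomial, Finsupp.prod_fintype, Fin.prod_univ_three, mul_comm]
  rw [eval_momentPolynomial hint]
  simp only [htrace, integral_trace_mul_mat_pow, hdet, map_mul, MvPolynomial.eval_C, map_pow,
    map_sum]

theorem multinomial_mul_integral_prod_dotProduct_mulVec_pow (k : Fin 3 → ℕ) :
    Nat.multinomial .univ ![k 0 + k 2, k 0 + k 1, k 1 + k 2] *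
      ∫ X, ∏ i, (u i ⬝ᵥ mat X *ᵥ w i) ^ (![k 0 + k 2, k 0 + k 1, k 1 + k 2] i) ∂μ =
    catalan (∑ j, k j) * (Nat.multinomial .univ k * ∏ j, wedgeWeights u w j ^ k j) := by
  rw [← coeff_momentPolynomial, sum_triangle_degrees, momentPolynomial_dotProduct_mulVec,
    MvPolynomial.coeff_C_mul, ← sum_smul_edge, coeff_sum_monomial_pow linearIndependent_edge]

theorem integral_prod_dotProduct_mulVec_pow (k : Fin 3 → ℕ) :
    ∫ X, ∏ i, (u i ⬝ᵥ mat X *ᵥ w i) ^ (![k 0 + k 2, k 0 + k 1, k 1 + k 2] i) ∂μ =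
      (∏ j, wedgeWeights u w j ^ k j) *
        ((k 0 + k 1).factorial * (k 1 + k 2).factorial * (k 0 + k 2).factorial) /
        ((∑ j, k j + 1).factorial * ∏ j, (k j).factorial) := by
  set d := ![k 0 + k 2, k 0 + k 1, k 1 + k 2] with hd
  set m := ∑ j, k j
  have hdegree : ∑ i, d i = 2 * m := sum_triangle_degrees k
  have hmoment := multinomial_mul_integral_prod_dotProduct_mulVec_pow μ u w k
  have hfact : (∏ i, (d i).factorial) * Nat.multinomial .univ d = (m + 1).factorial *
      (catalan m * ((∏ j, (k j).factorial) * Nat.multinomial .univ k)) := by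
    rw [Nat.multinomial_spec, Nat.multinomial_spec, hdegree,
      ← factorial_mul_factorial_mul_catalan]
    ring
  have hmultinomial : (Nat.multinomial .univ d : ℂ) ≠ 0 :=
    Nat.cast_ne_zero.2 (Nat.multinomial_pos _ _).ne'
  have hdenom : ((m + 1).factorial * ∏ j, (k j).factorial : ℂ) ≠ 0 := by
    exact_mod_cast (Nat.mul_pos (Nat.factorial_pos _)
      (Finset.prod_pos fun j _ ↦ Nat.factorial_pos _)).ne'
  rw [Fin.prod_univ_three] at hfact
  apply_fun ((↑) : ℕ → ℂ) at hfact
  simp only [Nat.cast_mul] at hfact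
  rw [eq_div_iff hdenom]
  refine mul_left_cancel₀ hmultinomial ?_
  simp only [hd, cons_val] at hfact hmoment ⊢
  linear_combination ((m + 1).factorial * ∏ j, (k j).factorial : ℂ) * hmoment -
    (∏ j, wedgeWeights u w j ^ k j) * hfact

end SU2

theorem dotSigma_eq (n : Fin 3 → ℝ) :
    dotSigma n = !![(n 2 : ℂ), n 0 - n 1 * I; n 0 + n 1 * I, -n 2] := by
  ext i j
  fin_cases i <;> fin_cases j <;> simp [dotSigma, pauli, Fin.sum_univ_three, sub_eq_add_neg]

namespace IsCoherentState

open scoped ComplexConjugate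

variable {n n' : Fin 3 → ℝ} {v v' : Fin 2 → ℂ}

theorem vecMulVec_star (h : IsCoherentState n v) :
    vecMulVec v (star v) = (1 / 2 : ℂ) • (1 + dotSigma n) := by
  obtain ⟨heigen, hunit⟩ := h
  rw [dotSigma_eq] at heigen ⊢
  have h0 := congrFun heigen 0
  have h1 := congrFun heigen 1
  simp only [mulVec, dotProduct, Fin.sum_univ_two, of_apply, cons_val] at h0 h1 hunit
  have h0' := congrArg star h0
  have h1' := congrArg star h1
  simp only [star_add, star_sub, star_neg, star_mul', Pi.star_apply, RCLike.star_def,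
    conj_ofReal, conj_I] at h0' h1' hunit
  have h01 : v 0 * conj (v 1) = (n 0 - n 1 * I) / 2 := by
    linear_combination -(h0 * conj (v 1) + h1' * v 0) / 2 + (n 0 - n 1 * I) / 2 * hunit
  have h10 : v 1 * conj (v 0) = (n 0 + n 1 * I) / 2 := by
    linear_combination -(h0' * v 1 + h1 * conj (v 0)) / 2 + (n 0 + n 1 * I) / 2 * hunit
  have h00 : v 0 * conj (v 0) = (1 + n 2) / 2 := by
    linear_combination (-(h0 * conj (v 0)) + h1 * conj (v 1) + (n 0 - n 1 * I) * h10 -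
      (n 0 + n 1 * I) * h01 + (1 + n 2) * hunit) / 2
  have h11 : v 1 * conj (v 1) = (1 - n 2) / 2 := by linear_combination hunit - h00
  ext i j
  fin_cases i <;> fin_cases j <;> simp [vecMulVec_apply, h00, h01, h10, h11] <;> ring

theorem wedge_mul_star_wedge (h : IsCoherentState n v) (h' : IsCoherentState n' v') :
    wedge v v' * star (wedge v v') = ((1 - ∑ j, n j * n' j) / 2 : ℝ) := by
  calc wedge v v' * star (wedge v v')
      = vecMulVec v (star v) 0 0 * vecMulVec v' (star v') 1 1 +
        vecMulVec v (star v) 1 1 * vecMulVec v' (star v') 0 0 -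
        vecMulVec v (star v) 0 1 * vecMulVec v' (star v') 1 0 -
        vecMulVec v (star v) 1 0 * vecMulVec v' (star v') 0 1 := by
        simp only [wedge, vecMulVec_apply, Pi.star_apply, star_sub, star_mul']
        ring
    _ = ((1 - ∑ j, n j * n' j) / 2 : ℝ) := by
        rw [h.vecMulVec_star, h'.vecMulVec_star, dotSigma_eq, dotSigma_eq, Fin.sum_univ_three]
        simp only [Matrix.smul_apply, Matrix.add_apply, one_apply, of_apply, cons_val,
          smul_eq_mul, Fin.isValue, zero_ne_one, one_ne_zero, if_true, if_false]
        push_cast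
        linear_combination (n 1 * n' 1 / 2 : ℂ) * I_sq

theorem dotProduct_le_one (h : IsCoherentState n v) (h' : IsCoherentState n' v') :
    ∑ j, n j * n' j ≤ 1 := by
  have hnormSq : normSq (wedge v v') = (1 - ∑ j, n j * n' j) / 2 := by
    exact_mod_cast (mul_conj _).symm.trans (h.wedge_mul_star_wedge h')
  linarith [normSq_nonneg (wedge v v')]

end IsCoherentState

theorem stmt_12_general (μ : Measure SU2) [μ.IsMulLeftInvariant] [IsProbabilityMeasure μ]
    (n : Fin 3 → Fin 3 → ℝ) (p q r : ℕ)
    (twok : Fin 3 → ℕ) (ht1 : twok 0 = p + r) (ht2 : twok 1 = p + q) (ht3 : twok 2 = q + r)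
    (v : Fin 3 → Fin 2 → ℂ) (hv : ∀ i, IsCoherentState (n i) (v i)) :
    ∫ X : SU2, (∏ i : Fin 3, (star (v i) ⬝ᵥ (SU2.mat X).mulVec (v i)) ^ twok i) ∂μ
      = (((1 - (∑ j, n 0 j * n 1 j)) ^ p * (1 - (∑ j, n 1 j * n 2 j)) ^ q
            * (1 - (∑ j, n 0 j * n 2 j)) ^ r / 2 ^ (p + q + r)
          * ((p + q).factorial * (q + r).factorial * (p + r).factorial)
          / ((p + q + r + 1).factorial * p.factorial * q.factorial * r.factorial) : ℝ) : ℂ)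
    ∧ (0 : ℝ) ≤ (1 - (∑ j, n 0 j * n 1 j)) ^ p * (1 - (∑ j, n 1 j * n 2 j)) ^ q
            * (1 - (∑ j, n 0 j * n 2 j)) ^ r / 2 ^ (p + q + r)
          * ((p + q).factorial * (q + r).factorial * (p + r).factorial)
          / ((p + q + r + 1).factorial * p.factorial * q.factorial * r.factorial) := by
  have htwok : twok = ![p + r, p + q, q + r] := by
    ext i
    fin_cases i <;> simp [ht1, ht2, ht3]
  have hwedge (i j : Fin 3) : wedge (star (v i)) (star (v j)) * wedge (v i) (v j) =
      ((1 - ∑ l, n i l * n j l) / 2 : ℝ) := by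
    rw [← (hv i).wedge_mul_star_wedge (hv j)]
    simp [wedge, mul_comm]
  have hnonneg (i j : Fin 3) : 0 ≤ 1 - ∑ l, n i l * n j l :=
    sub_nonneg.2 ((hv i).dotProduct_le_one (hv j))
  constructor
  · rw [htwok]
    refine (SU2.integral_prod_dotProduct_mulVec_pow μ (fun i ↦ star (v i)) v ![p, q, r]).trans ?_
    simp only [wedgeWeights, Fin.sum_univ_three, Fin.prod_univ_three, cons_val, hwedge]
    push_cast
    simp only [div_pow, pow_add]
    ring
  · have := hnonneg 0 1
    have := hnonneg 1 2
    have := hnonneg 0 2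
    positivity

/-- the squared norm of the coherent triangle intertwiner,
`f_Δ = ∫_{SU(2)} ∏ᵢ ⟨nᵢ|X|nᵢ⟩^{2kᵢ} dX` (normalized Haar measure), is the explicit
nonnegative real number
`((1-n₁·n₂)^p (1-n₂·n₃)^q (1-n₁·n₃)^r / 2^{p+q+r}) · (p+q)!(q+r)!(p+r)!/((p+q+r+1)!p!q!r!)`,
where `p = k₁+k₂-k₃`, `q = k₂+k₃-k₁`, `r = k₁+k₃-k₂` (so `2k₁ = p+r`, `2k₂ = p+q`,
`2k₃ = q+r`). -/
theorem stmt_12 (μ : Measure SU2) [μ.IsHaarMeasure] [IsProbabilityMeasure μ]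
    (n : Fin 3 → Fin 3 → ℝ) (hn : ∀ i, ∑ j, n i j ^ 2 = 1)
    (k : Fin 3 → ℝ) (p q r : ℕ)
    (hk1 : 2 * k 0 = (p : ℝ) + r) (hk2 : 2 * k 1 = (p : ℝ) + q) (hk3 : 2 * k 2 = (q : ℝ) + r)
    (twok : Fin 3 → ℕ) (ht1 : twok 0 = p + r) (ht2 : twok 1 = p + q) (ht3 : twok 2 = q + r)
    (hclosure : (fun j => ∑ i, k i * n i j) = 0)
    (v : Fin 3 → Fin 2 → ℂ) (hv : ∀ i, IsCoherentState (n i) (v i)) :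
    ∫ X : SU2, (∏ i : Fin 3, (star (v i) ⬝ᵥ (SU2.mat X).mulVec (v i)) ^ twok i) ∂μ
      = (((1 - (∑ j, n 0 j * n 1 j)) ^ p * (1 - (∑ j, n 1 j * n 2 j)) ^ q
            * (1 - (∑ j, n 0 j * n 2 j)) ^ r / 2 ^ (p + q + r)
          * ((p + q).factorial * (q + r).factorial * (p + r).factorial)
          / ((p + q + r + 1).factorial * p.factorial * q.factorial * r.factorial) : ℝ) : ℂ)
    ∧ (0 : ℝ) ≤ (1 - (∑ j, n 0 j * n 1 j)) ^ p * (1 - (∑ j, n 1 j * n 2 j)) ^ q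
            * (1 - (∑ j, n 0 j * n 2 j)) ^ r / 2 ^ (p + q + r)
          * ((p + q).factorial * (q + r).factorial * (p + r).factorial)
          / ((p + q + r + 1).factorial * p.factorial * q.factorial * r.factorial) := by
  exact stmt_12_general μ n p q r twok ht1 ht2 ht3 v hv
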